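/- arXiv:2209.02640 — 2 statements merged into one kernel-verified Lean document; each statement's English description precedes it below -/
import Mathlib

section
/- For every finite simple graph G on a nonempty finite vertex set V, there exists a polynomial P with integer coefficients, monic of degree |V|, such that for every natural number k, the number of proper k-colorings of G equals P evaluated at k. -/
open Polynomial in
/-- **Chromatic polynomial exists.** For every finite simple graph `G` on a nonempty finite
vertex set `V`, there is a monic integer polynomial `P` of degree `|V|` such that for every
natural number `k`, the number of proper `k`-colorings of `G` equals `P(k)`. -/
theorem chromatic_polynomial_exists {V : Type*} [Fintype V] [Nonempty V]
    (G : SimpleGraph V) :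
    ∃ P : Polynomial ℤ, P.Monic ∧ P.natDegree = Fintype.card V ∧
      ∀ k : ℕ, (Nat.card (G.Coloring (Fin k)) : ℤ) = P.eval (k : ℤ) := by
  classical
  let S := {s : Setoid V // ∀ v w, G.Adj v w → ¬ s v w}
  haveI : Finite (Setoid V) := Finite.of_injective (fun s : Setoid V => (fun v w => s v w))
    (fun s t h => Setoid.ext fun a b => by
      have := congrFun (congrFun h a) b
      exact iff_of_eq this)
  haveI : Finite S := Subtype.finite
  letI : Fintype S := Fintype.ofFinite S
  let b : S := ⟨⊥, fun v w h e => G.ne_of_adj h e⟩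
  let f : S → Polynomial ℤ := fun s => descPochhammer ℤ (Nat.card (Quotient s.1))
  have hdeg : ∀ s, (f s).degree = (Nat.card (Quotient s.1) : ℕ) := fun s => by
    rw [Polynomial.degree_eq_natDegree (monic_descPochhammer ℤ _).ne_zero,
      descPochhammer_natDegree]
  have hb : Nat.card (Quotient b.1) = Fintype.card V := by
    rw [← Nat.card_eq_fintype_card]
    exact (Nat.card_eq_of_bijective (Quotient.mk b.1)
      ⟨fun x y h => Quotient.exact h, Quotient.mk_surjective⟩).symm
  have hlt : ∀ s, s ≠ b → Nat.card (Quotient s.1) < Fintype.card V := by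
    intro s hs
    rw [← Nat.card_eq_fintype_card]
    by_contra! hle
    apply hs
    have hbij := (Function.Surjective.bijective_of_nat_card_le
      (Quotient.mk_surjective (s := s.1)) hle)
    apply Subtype.ext
    apply Setoid.ext
    intro x y
    constructor
    · intro h
      exact hbij.1 (Quotient.sound h)
    · intro h
      have h' : x = y := h
      exact h' ▸ s.1.refl x
  have hrest : (∑ s ∈ Finset.univ.erase b, f s).degree < (f b).degree := by
    refine (Polynomial.degree_sum_le _ _).trans_lt ?_
    rw [hdeg b, Finset.sup_lt_iff (WithBot.bot_lt_coe _)]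
    intro s hs
    rw [hdeg s, hb]
    exact_mod_cast hlt s (Finset.ne_of_mem_erase hs)
  refine ⟨∑ s, f s, ?_, ?_, ?_⟩
  · rw [← Finset.add_sum_erase _ _ (Finset.mem_univ b)]
    exact (monic_descPochhammer ℤ _).add_of_left hrest
  · rw [← Finset.add_sum_erase _ _ (Finset.mem_univ b),
      Polynomial.natDegree_add_eq_left_of_degree_lt hrest, descPochhammer_natDegree, hb]
  · intro k
    let F : (Σ s : S, (Quotient s.1 ↪ Fin k)) → G.Coloring (Fin k) := fun p =>
      SimpleGraph.Coloring.mk (fun v => p.2 (Quotient.mk p.1.1 v)) (by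
        intro v w h e
        exact p.1.2 v w h (Quotient.exact (p.2.injective e)))
    have hF : Function.Bijective F := by
      constructor
      · rintro ⟨⟨s, hs⟩, e⟩ ⟨⟨t, ht⟩, e'⟩ h
        have h1 : ∀ v, e (Quotient.mk s v) = e' (Quotient.mk t v) := fun v =>
          DFunLike.congr_fun h v
        have hst : s = t := by
          apply Setoid.ext
          intro x y
          constructor
          · intro hxy
            have := congrArg e (Quotient.sound (s := s) hxy)
            rw [h1, h1] at this
            exact Quotient.exact (e'.injective this)
          · intro hxy
            have := congrArg e' (Quotient.sound (s := t) hxy)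
            rw [← h1, ← h1] at this
            exact Quotient.exact (e.injective this)
        subst hst
        have : e = e' := by
          ext q
          induction q using Quotient.inductionOn with
          | h v => rw [h1 v]
        rw [this]
      · intro c
        refine ⟨⟨⟨Setoid.ker c, fun v w h e => c.valid h e⟩,
          ⟨Quotient.lift c (fun _ _ h => h), ?_⟩⟩, ?_⟩
        · intro p q
          induction p using Quotient.inductionOn
          induction q using Quotient.inductionOn
          intro h
          exact Quotient.sound h
        · ext v
          rfl
    rw [← Nat.card_eq_of_bijective F hF, Nat.card_sigma, Polynomial.eval_finsetSum]
    push_cast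
    refine Finset.sum_congr rfl fun s _ => ?_
    rw [descPochhammer_eval_eq_descFactorial, Nat.card_eq_fintype_card,
      Fintype.card_embedding_eq, Fintype.card_fin, Nat.card_eq_fintype_card]
end

section
/- Let G be a finite simple graph on a finite vertex set V with |V| = n, and let P be its chromatic polynomial (the unique integer polynomial with P(k) equal to the number of proper k-colorings for all natural numbers k). Then the coefficients of P alternate in sign: for every 0 ≤ i ≤ n, (−1)^{n−i} times the coefficient of X^i in P is nonnegative. -/
open Classical in
theorem chrom_aux {V : Type*} [Fintype V] (a b : V) (hab : a ≠ b) (L : List (V × V)) (k : ℕ)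
    (π : V → {v : V // v ≠ b}) (hπ : ∀ v (h : v ≠ b), π v = ⟨v, h⟩) (hb : π b = ⟨a, hab⟩) :
    Nat.card {f : V → Fin k // ∀ p ∈ L, f p.1 ≠ f p.2} =
    Nat.card {f : V → Fin k // ∀ p ∈ (a, b) :: L, f p.1 ≠ f p.2} +
    Nat.card {f : {v : V // v ≠ b} → Fin k //
      ∀ p ∈ L.map (fun p => (π p.1, π p.2)), f p.1 ≠ f p.2} := by
  have key : ∀ f : V → Fin k, f a = f b → ∀ v, f (π v).1 = f v := by
    intro f hf v
    by_cases h : v = b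
    · subst h; rw [hb]; exact hf
    · rw [hπ v h]
  have e : {f : {v : V // v ≠ b} → Fin k //
      ∀ p ∈ L.map (fun p => (π p.1, π p.2)), f p.1 ≠ f p.2} ≃
      {f : V → Fin k // (∀ p ∈ L, f p.1 ≠ f p.2) ∧ f a = f b} :=
    { toFun := fun g => ⟨fun v => g.1 (π v), by
        refine ⟨fun p hp => g.2 _ (List.mem_map_of_mem hp), ?_⟩
        show g.1 (π a) = g.1 (π b)
        rw [hb, hπ a hab]⟩
      invFun := fun f => ⟨fun v => f.1 v.1, by
        intro p hp
        obtain ⟨q, hq, rfl⟩ := List.mem_map.1 hp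
        have := f.2.1 q hq
        simpa only [key f.1 f.2.2] using this⟩
      left_inv := by
        intro g
        ext v
        simp [hπ v.1 v.2]
      right_inv := by
        intro f
        apply Subtype.ext
        funext v
        exact key f.1 f.2.2 v }
  rw [Nat.card_congr e]
  simp only [Nat.card_eq_fintype_card, Fintype.card_subtype]
  rw [← Finset.card_filter_add_card_filter_not (s := Finset.univ.filter
    (fun f : V → Fin k => ∀ p ∈ L, f p.1 ≠ f p.2)) (fun f => f a = f b), add_comm]
  simp only [Finset.filter_filter, List.forall_mem_cons]
  congr 2
  ext f
  simp [and_comm]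

open Classical in
theorem chrom_exists (m : ℕ) : ∀ {V : Type*} [Fintype V] (L : List (V × V)), L.length = m →
    ∃ P : Polynomial ℤ, (∀ k : ℕ, P.eval (k : ℤ) =
      (Nat.card {f : V → Fin k // ∀ p ∈ L, f p.1 ≠ f p.2} : ℤ)) ∧
      ∀ i, 0 ≤ (-1 : ℤ) ^ (Fintype.card V + i) * P.coeff i := by
  induction m with
  | zero =>
    intro V _ L hL
    obtain rfl := List.length_eq_zero_iff.1 hL
    refine ⟨Polynomial.X ^ Fintype.card V, fun k => ?_, fun i => ?_⟩
    · simp [Fintype.card_subtype]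
    · rw [Polynomial.coeff_X_pow]
      split_ifs with h
      · subst h; simp [← two_mul]
      · simp
  | succ m ih =>
    intro V _ L hL
    obtain _ | ⟨⟨a, b⟩, L⟩ := L
    · simp at hL
    by_cases hab : a = b
    · subst hab
      exact ⟨0, fun k => by simp, fun i => by simp⟩
    · let π : V → {v : V // v ≠ b} := fun v => if h : v = b then ⟨a, hab⟩ else ⟨v, h⟩
      have hL' : L.length = m := by simpa using hL
      obtain ⟨P, hP, hP'⟩ := ih L hL'
      obtain ⟨Q, hQ, hQ'⟩ := ih (L.map (fun p => (π p.1, π p.2))) (by simpa using hL')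
      refine ⟨P - Q, fun k => ?_, fun i => ?_⟩
      · have := chrom_aux a b hab L k π (fun v h => by simp [π, h]) (by simp [π])
        rw [Polynomial.eval_sub, hP, hQ, this]
        push_cast
        ring
      · have h1 := hP' i
        have h2 := hQ' i
        have hc : Fintype.card V = Fintype.card {v : V // v ≠ b} + 1 := by
          have : 0 < Fintype.card V := Fintype.card_pos_iff.2 ⟨b⟩
          have h3 : Fintype.card {v : V // v ≠ b} = Fintype.card V - 1 := by
            simp
          omega
        rw [Polynomial.coeff_sub, mul_sub]
        have : (-1 : ℤ) ^ (Fintype.card V + i) = - (-1) ^ (Fintype.card {v : V // v ≠ b} + i) := by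
          rw [hc]; ring
        rw [this] at h1 ⊢
        linarith

/-- **Alternating signs of chromatic polynomial coefficients.** If `P` is the chromatic
polynomial of a finite simple graph `G` on `n` vertices (i.e. `P(k)` is the number of proper
`k`-colorings for every natural `k`), then for every `0 ≤ i ≤ n` the number
`(−1)^(n−i) * (coefficient of Xⁱ in P)` is nonnegative. -/
theorem chromatic_polynomial_coeff_alternate {V : Type*} [Fintype V]
    (G : SimpleGraph V) (n : ℕ) (hn : n = Fintype.card V)
    (P : Polynomial ℤ)
    (hP : ∀ k : ℕ, P.eval (k : ℤ) = (Nat.card (G.Coloring (Fin k)) : ℤ)) :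
    ∀ i ≤ n, 0 ≤ (-1 : ℤ) ^ (n - i) * P.coeff i := by
  classical
  intro i hi
  let L : List (V × V) := (Finset.univ.filter (fun p : V × V => G.Adj p.1 p.2)).toList
  have hL : ∀ p : V × V, p ∈ L ↔ G.Adj p.1 p.2 := fun p => by simp [L]
  obtain ⟨Q, hQ, hQ'⟩ := chrom_exists _ L rfl
  have hPQ : P = Q := by
    apply Polynomial.eq_of_infinite_eval_eq
    refine (Set.infinite_range_of_injective (Nat.cast_injective (R := ℤ))).mono ?_
    rintro _ ⟨k, rfl⟩
    show P.eval (k : ℤ) = Q.eval (k : ℤ)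
    rw [hP, hQ]
    congr 1
    refine Nat.card_congr
      { toFun := fun c => ⟨fun v => c v, fun p hp => c.valid ((hL p).1 hp)⟩
        invFun := fun f => SimpleGraph.Coloring.mk f.1
          (fun {v w} h => f.2 (v, w) ((hL (v, w)).2 h))
        left_inv := fun c => by ext v; rfl
        right_inv := fun f => rfl }
  have h := hQ' i
  rw [← hn, ← hPQ] at h
  obtain ⟨d, rfl⟩ := Nat.exists_eq_add_of_le hi
  have : (-1 : ℤ) ^ (i + d + i) = (-1) ^ d := by
    rw [show i + d + i = d + 2 * i by ring, pow_add, pow_mul]; simp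
  rw [this] at h
  simpa using h
end
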